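/- Let k ∈ ℕ, let 0 < r ≤ R, and set Δ_k = √2 · (5k·ln(k+1)·√(2π(k+1)))^{1/k}. If m is a natural number with (Δ_k · R / r)^k < m, then there exist points v₁, …, v_m on the Euclidean sphere ∂B₂^{k+1}(0, R) = {x ∈ ℝ^{k+1} : ‖x‖₂ = R} such that ∂B₂^{k+1}(0, R) ⊆ ⋃_{i=1}^m B₂^{k+1}(v_i, r), where B₂^{k+1}(v, r) is the closed Euclidean ball of radius r around v. -/

import Mathlib

open scoped ENNReal BigOperators

noncomputable section

/-- A multilayer perceptron (feedforward ReLU network) with input dimension `m`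
and output dimension `n`, given as a nonempty list of affine layers. -/
inductive MLP : ℕ → ℕ → Type
  | last : {m n : ℕ} → Matrix (Fin n) (Fin m) ℝ → (Fin n → ℝ) → MLP m n
  | cons : {m h n : ℕ} → Matrix (Fin h) (Fin m) ℝ → (Fin h → ℝ) → MLP h n → MLP m n

/-- Evaluation of an MLP: every affine layer except the last is followed by a
coordinatewise ReLU. -/
def MLP.eval : {m n : ℕ} → MLP m n → (Fin m → ℝ) → Fin n → ℝ
  | _, _, .last W b, x => W.mulVec x + b
  | _, _, .cons W b rest, x => MLP.eval rest fun i => max ((W.mulVec x + b) i) 0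

/-- Depth of an MLP: the number of affine layers. -/
def MLP.depth : {m n : ℕ} → MLP m n → ℕ
  | _, _, .last _ _ => 1
  | _, _, .cons _ _ rest => MLP.depth rest + 1

/-- Width of an MLP: the maximum of the hidden-layer dimensions. -/
def MLP.width : {m n : ℕ} → MLP m n → ℕ
  | _, _, .last _ _ => 0
  | _, _, @MLP.cons _ h _ _ _ rest => max h (MLP.width rest)

/-- The `l_p` (quasi-)norm on `ℝ^d`, for `p ∈ (0,∞]`. -/
def lpNorm (p : ℝ≥0∞) {d : ℕ} (x : Fin d → ℝ) : ℝ :=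
  if p = ⊤ then ⨆ i, |x i| else (∑ i, |x i| ^ p.toReal) ^ (1 / p.toReal)

/-- The `l_p` norm on `ℝ^d` with a real exponent `p`. -/
def lpNormR (p : ℝ) {d : ℕ} (x : Fin d → ℝ) : ℝ := (∑ i, |x i| ^ p) ^ (1 / p)

/-- `1/p`, with the convention `1/∞ = 0`. -/
def rinv (p : ℝ≥0∞) : ℝ := if p = ⊤ then 0 else 1 / p.toReal

/-- `c_p^+(d) = d^{[1/2 - 1/p]_+}`. -/
def cplus (p : ℝ≥0∞) (d : ℕ) : ℝ := (d : ℝ) ^ max ((1 : ℝ) / 2 - rinv p) 0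

/-- `c_p^-(d) = d^{[1/2 - 1/p]_-}`. -/
def cminus (p : ℝ≥0∞) (d : ℕ) : ℝ := (d : ℝ) ^ min ((1 : ℝ) / 2 - rinv p) 0

/-- A dataset is `(δ, q)`-separated if the minimal `l_q` distance between
differently labeled points equals `δ`. -/
def Separated {N d : ℕ} (q : ℝ≥0∞) (δ : ℝ) (X : Fin N → Fin d → ℝ) (Y : Fin N → ℕ) : Prop :=
  (∀ i j, Y i ≠ Y j → δ ≤ lpNorm q (X i - X j)) ∧
    ∃ i j, Y i ≠ Y j ∧ lpNorm q (X i - X j) = δ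

/-- `f` `(σ, p)`-robustly memorizes the dataset `(X, Y)`. -/
def RobustMem {N d : ℕ} (p : ℝ≥0∞) (σ : ℝ) (X : Fin N → Fin d → ℝ) (Y : Fin N → ℕ)
    (f : (Fin d → ℝ) → ℝ) : Prop :=
  ∀ i, ∀ x : Fin d → ℝ, lpNorm p (x - X i) ≤ σ → f x = (Y i : ℝ)

/-- A matrix `M` `(σ, k)`-preserves a dataset: Euclidean distances between points of
`σ`-neighborhoods (in `l₂`) of differently labeled data points do not decrease. -/
def Preserves {N d m : ℕ} (σ : ℝ) (X : Fin N → Fin d → ℝ) (Y : Fin N → ℕ)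
    (M : Matrix (Fin m) (Fin d) ℝ) : Prop :=
  ∀ i j, Y i ≠ Y j → ∀ a a' : Fin d → ℝ,
    lpNorm 2 (a - X i) ≤ σ → lpNorm 2 (a' - X j) ≤ σ →
      lpNorm 2 (a - a') ≤ lpNorm 2 (M.mulVec a - M.mulVec a')

/-- The `l₂ → l₂` (spectral) operator norm of a matrix. -/
def matOpNorm {m d : ℕ} (M : Matrix (Fin m) (Fin d) ℝ) : ℝ :=
  sSup {c | ∃ x : Fin d → ℝ, lpNorm 2 x ≤ 1 ∧ c = lpNorm 2 (M.mulVec x)}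

/-- Generalized binomial coefficient `C(s, m) = s(s-1)⋯(s-m+1)/m!`. -/
def gchoose (s : ℝ) (m : ℕ) : ℝ := (∏ i ∈ Finset.range m, (s - (i : ℝ))) / (m.factorial : ℝ)

/-!
Let `p` and `q` be the measures of the caps of radii `ρ / 11` and `9 ρ / 11` on the unit sphere of a
`(k + 1)`-dimensional space. A maximal `2 ρ / 11`-separated set is a `2 ρ / 11`-net, and it has at
most `1 / p` points because the caps of half that radius are disjoint. Averaging yields a centre
lying in a proportion `q` of any finite family of caps of measure `q`. Hence about `log (q / p) / q`
greedily chosen centres meet the `9 ρ / 11`-caps around all but `1 / q` of the points of the net,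
and one further centre for each missed cap gives a `ρ`-cover.

The cap measure is bounded below by comparing the cone over a cap with the bicone over the base disc
of the cap whose apexes are the centre of the sphere and the centre of the cap: the volume of the
bicone is explicit, and the ratio of the volumes of the unit balls in dimensions `k` and `k + 1` is
controlled by the log-convexity of `Γ`. For caps of radius `s ≤ 1` this gives the bound
`(√3 / 2 * s) ^ k / √(2 π (k + 1))`. The scales `1 / 11` and `9 / 11` satisfy
`√3 / 2 * (9 / 11) * √2 ≥ 1` and `log 9 + 5 / 4 ≤ 5 log 2`, which produces the constants `√2`
and `5`.
-/

open MeasureTheory hiding lpNorm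
open Metric Set
open scoped NNReal RealInnerProductSpace Pointwise

section HittingSets

variable {α ι : Type*} [MeasurableSpace α] {μ : Measure α} [IsProbabilityMeasure μ]
  {A : ι → Set α} {S : Finset ι} {q : ℝ}

open Classical in
theorem exists_mul_card_le_card_filter_mem (hA : ∀ i, MeasurableSet (A i))
    (hq : ∀ i ∈ S, q ≤ μ.real (A i)) :
    ∃ x, q * S.card ≤ (S.filter (x ∈ A ·)).card := by
  let count : α → ℝ := fun x => ∑ i ∈ S, (A i).indicator 1 x
  have integrable_indicator (i : ι) : Integrable ((A i).indicator (1 : α → ℝ)) μ :=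
    (integrable_const 1).indicator (hA i)
  have count_eq (x : α) : count x = (S.filter (x ∈ A ·)).card := by
    simp [count, Set.indicator_apply, Finset.sum_boole]
  obtain ⟨x, hx⟩ := exists_integral_le (μ := μ)
    (integrable_finsetSum S fun i _ => integrable_indicator i : Integrable count μ)
  refine ⟨x, ?_⟩
  calc q * S.card = ∑ _i ∈ S, q := by rw [Finset.sum_const, nsmul_eq_mul, mul_comm]
    _ ≤ ∑ i ∈ S, μ.real (A i) := Finset.sum_le_sum hq
    _ = ∫ x, count x ∂μ := by
        rw [integral_finsetSum S fun i _ => integrable_indicator i]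
        exact Finset.sum_congr rfl fun i _ => (integral_indicator_one (hA i)).symm
    _ ≤ (S.filter (x ∈ A ·)).card := hx.trans_eq (count_eq x)

open Classical in
theorem exists_card_le_card_filter_notMem_le (hA : ∀ i, MeasurableSet (A i)) (hq1 : q ≤ 1)
    (hq : ∀ i ∈ S, q ≤ μ.real (A i)) (n : ℕ) :
    ∃ T : Finset α, T.card ≤ n ∧
      ((S.filter fun i => ∀ x ∈ T, x ∉ A i).card : ℝ) ≤ (1 - q) ^ n * S.card := by
  induction n with
  | zero => exact ⟨∅, by simp⟩
  | succ n ih =>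
    obtain ⟨T, hTcard, hT⟩ := ih
    set missed := S.filter fun i => ∀ x ∈ T, x ∉ A i with hmissed
    obtain ⟨x, hx⟩ := exists_mul_card_le_card_filter_mem (S := missed) hA
      fun i hi => hq i (Finset.mem_of_mem_filter i hi)
    refine ⟨insert x T, (Finset.card_insert_le x T).trans (by omega), ?_⟩
    have missed_insert : (S.filter fun i => ∀ y ∈ insert x T, y ∉ A i)
        = missed.filter (x ∉ A ·) := by
      ext i
      simp only [hmissed, Finset.mem_filter, Finset.forall_mem_insert]
      tauto
    have card_split : ((missed.filter (x ∈ A ·)).card : ℝ) + (missed.filter (x ∉ A ·)).card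
        = missed.card := mod_cast Finset.card_filter_add_card_filter_not (x ∈ A ·)
    calc ((S.filter fun i => ∀ y ∈ insert x T, y ∉ A i).card : ℝ)
        = (missed.filter (x ∉ A ·)).card := by rw [missed_insert]
      _ ≤ (1 - q) * missed.card := by linarith
      _ ≤ (1 - q) * ((1 - q) ^ n * S.card) := by gcongr
      _ = (1 - q) ^ (n + 1) * S.card := by ring

theorem exists_hittingSet_card_le {a : ℝ} (hA : ∀ i, MeasurableSet (A i)) (hq0 : 0 < q)
    (hq1 : q ≤ 1) (ha : 0 ≤ a) (hq : ∀ i ∈ S, q ≤ μ.real (A i)) (hS : q * S.card ≤ Real.exp a) :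
    ∃ T : Finset α, (∀ i ∈ S, ∃ x ∈ T, x ∈ A i) ∧ (T.card : ℝ) ≤ (a + 1) / q + 1 := by
  classical
  obtain ⟨T, hTcard, hT⟩ := exists_card_le_card_filter_notMem_le hA hq1 hq ⌈a / q⌉₊
  set missed := S.filter fun i => ∀ x ∈ T, x ∉ A i with hmissed
  have nonempty (i : ι) (hi : i ∈ S) : (A i).Nonempty :=
    nonempty_of_measureReal_ne_zero (hq0.trans_le (hq i hi)).ne'
  have : Nonempty α := nonempty_of_isProbabilityMeasure μ
  choose! pt hpt using nonempty
  have missed_card : (missed.card : ℝ) ≤ 1 / q := by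
    have decay : (1 - q) ^ ⌈a / q⌉₊ ≤ Real.exp (-a) := calc
      (1 - q) ^ ⌈a / q⌉₊ ≤ Real.exp (-q) ^ ⌈a / q⌉₊ :=
        pow_le_pow_left₀ (sub_nonneg.2 hq1) (Real.one_sub_le_exp_neg q) _
      _ = Real.exp (-(⌈a / q⌉₊ * q)) := by rw [← Real.exp_nat_mul, mul_neg]
      _ ≤ Real.exp (-a) := by gcongr; exact (div_le_iff₀ hq0).1 (Nat.le_ceil _)
    calc (missed.card : ℝ) ≤ Real.exp (-a) * S.card := hT.trans (by gcongr)
      _ ≤ Real.exp (-a) * (Real.exp a / q) := by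
          gcongr; rwa [le_div_iff₀' hq0]
      _ = 1 / q := by rw [← mul_div_assoc, ← Real.exp_add, neg_add_cancel, Real.exp_zero]
  refine ⟨T ∪ missed.image pt, fun i hi => ?_, ?_⟩
  · by_cases hit : ∃ x ∈ T, x ∈ A i
    · obtain ⟨x, hxT, hxA⟩ := hit
      exact ⟨x, Finset.mem_union_left _ hxT, hxA⟩
    · push Not at hit
      exact ⟨pt i, Finset.mem_union_right _ (Finset.mem_image_of_mem pt
        (Finset.mem_filter.2 ⟨hi, hit⟩)), hpt i hi⟩
  · have union_card : ((T ∪ missed.image pt).card : ℝ) ≤ ⌈a / q⌉₊ + missed.card := mod_cast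
      (Finset.card_union_le _ _).trans (add_le_add hTcard Finset.card_image_le)
    have := Nat.ceil_lt_add_one (div_nonneg ha hq0.le)
    rw [add_div]
    linarith

end HittingSets

section MetricCovers

variable {X : Type*} [PseudoMetricSpace X] [MeasurableSpace X] [OpensMeasurableSpace X]
  {μ : Measure X} [IsProbabilityMeasure μ] {p a : ℝ}

theorem card_mul_le_one_of_isSeparated {ε : ℝ≥0} (hp : ∀ x, p ≤ μ.real (closedBall x ε))
    {N : Finset X} (hN : IsSeparated (2 * ε : ℝ≥0) (N : Set X)) : p * N.card ≤ 1 := by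
  have disjoint : (N : Set X).PairwiseDisjoint fun x => closedBall x (ε : ℝ) := by
    intro x hx y hy hxy
    refine closedBall_disjoint_closedBall ?_
    have : ((2 * ε : ℝ≥0) : ℝ≥0∞) < edist x y := hN hx hy hxy
    rw [edist_nndist, ENNReal.coe_lt_coe] at this
    rw [← two_mul]
    exact_mod_cast this
  calc p * N.card = ∑ _x ∈ N, p := by rw [Finset.sum_const, nsmul_eq_mul, mul_comm]
    _ ≤ ∑ x ∈ N, μ.real (closedBall x ε) := Finset.sum_le_sum fun x _ => hp x
    _ = μ.real (⋃ x ∈ N, closedBall x (ε : ℝ)) :=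
        (measureReal_biUnion_finset disjoint fun _ _ => isClosed_closedBall.measurableSet).symm
    _ ≤ 1 := measureReal_le_one

theorem packingNumber_two_mul_univ_le_floor {ε : ℝ≥0} (hp0 : 0 < p)
    (hp : ∀ x, p ≤ μ.real (closedBall x ε)) :
    packingNumber (2 * ε) (univ : Set X) ≤ ⌊1 / p⌋₊ := by
  refine iSup₂_le fun C _ => iSup_le fun hC => ?_
  by_contra! hcard
  obtain ⟨D, hDC, hD⟩ := exists_subset_encard_eq (Order.add_one_le_of_lt hcard)
  lift D to Finset X using finite_of_encard_eq_coe (k := ⌊1 / p⌋₊ + 1) (mod_cast hD)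
  rw [encard_coe_eq_coe_finsetCard] at hD
  have hDcard : (D.card : ℝ) = ⌊1 / p⌋₊ + 1 := mod_cast hD
  have : (D.card : ℝ) ≤ 1 / p :=
    (le_div_iff₀' hp0).2 (card_mul_le_one_of_isSeparated hp (hC.subset hDC))
  linarith [Nat.lt_floor_add_one (1 / p)]

theorem exists_finset_isCover_card_mul_le_one {ε : ℝ≥0} (hp0 : 0 < p)
    (hp : ∀ x, p ≤ μ.real (closedBall x ε)) :
    ∃ N : Finset X, IsCover (2 * ε) univ (N : Set X) ∧ p * N.card ≤ 1 := by
  have packing_finite : packingNumber (2 * ε) (univ : Set X) ≠ ⊤ :=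
    ne_top_of_le_ne_top (ENat.natCast_ne_top _) (packingNumber_two_mul_univ_le_floor hp0 hp)
  obtain ⟨N, hN⟩ := (encard_ne_top_iff.1 <|
    (encard_maximalSeparatedSet packing_finite).trans_ne packing_finite).exists_finset_coe
  exact ⟨N, hN ▸ isCover_maximalSeparatedSet packing_finite,
    card_mul_le_one_of_isSeparated hp (hN ▸ isSeparated_maximalSeparatedSet)⟩

theorem exists_finset_isCover_card_le {s t : ℝ≥0} (hp0 : 0 < p) (ha : 0 ≤ a)
    (hp : ∀ x, p ≤ μ.real (closedBall x t))
    (hs : ∀ x, Real.exp a * p ≤ μ.real (closedBall x s)) :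
    ∃ T : Finset X, IsCover (s + 2 * t) univ (T : Set X) ∧
      (T.card : ℝ) ≤ (a + 1) / (Real.exp a * p) + 1 := by
  obtain ⟨N, hN, hNcard⟩ := exists_finset_isCover_card_mul_le_one hp0 hp
  have : Nonempty X := nonempty_of_isProbabilityMeasure μ
  obtain ⟨T, hT, hTcard⟩ := exists_hittingSet_card_le (S := N) (A := fun x => closedBall x s)
    (fun _ => isClosed_closedBall.measurableSet) (by positivity)
    ((hs (Classical.arbitrary X)).trans measureReal_le_one) ha (fun x _ => hs x)
    (by rw [mul_assoc]; exact mul_le_of_le_one_right (Real.exp_nonneg a) hNcard)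
  refine ⟨T, ?_, hTcard⟩
  rw [isCover_iff_subset_iUnion_closedBall] at hN ⊢
  intro x hx
  obtain ⟨z, hzN, hxz⟩ := mem_iUnion₂.1 (hN hx)
  obtain ⟨y, hyT, hyz⟩ := hT z hzN
  rw [mem_closedBall] at hxz hyz
  refine mem_iUnion₂.2 ⟨y, hyT, mem_closedBall.2 ?_⟩
  rw [NNReal.coe_add]
  linarith [dist_triangle_right x y z]

end MetricCovers

theorem sqrt_mul_Gamma_add_half_le_Gamma_add_one {x : ℝ} (hx : 0 < x) :
    √x * Real.Gamma (x + 1 / 2) ≤ Real.Gamma (x + 1) := by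
  have log_convex : Real.Gamma (x + 1 / 2) ≤ √(Real.Gamma x) * √(Real.Gamma (x + 1)) := by
    have := Real.Gamma_mul_add_mul_le_rpow_Gamma_mul_rpow_Gamma hx (add_pos hx one_pos)
      one_half_pos one_half_pos (add_halves 1)
    rw [Real.sqrt_eq_rpow, Real.sqrt_eq_rpow]
    convert this using 2
    ring
  calc √x * Real.Gamma (x + 1 / 2) ≤ √x * (√(Real.Gamma x) * √(Real.Gamma (x + 1))) := by gcongr
    _ = √(Real.Gamma (x + 1)) * √(Real.Gamma (x + 1)) := by
        rw [← mul_assoc, ← Real.sqrt_mul hx.le, ← Real.Gamma_add_one hx.ne']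
    _ = Real.Gamma (x + 1) := Real.mul_self_sqrt (Real.Gamma_pos_of_pos (by positivity)).le

theorem integral_pow_mul_one_sub_div {β : ℝ} (hβ : β ≠ 0) (n : ℕ) :
    ∫ t in (0 : ℝ)..β, t ^ n * (1 - t / β) = β ^ (n + 1) / ((n + 1) * (n + 2)) := by
  have expand (t : ℝ) : t ^ n * (1 - t / β) = t ^ n - t ^ (n + 1) / β := by ring
  simp_rw [expand]
  rw [intervalIntegral.integral_sub ((continuous_pow n).intervalIntegrable _ _)
    (((continuous_pow (n + 1)).div_const β).intervalIntegrable _ _),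
    intervalIntegral.integral_div, integral_pow, integral_pow, zero_pow n.succ_ne_zero,
    zero_pow (n + 1).succ_ne_zero]
  push_cast
  field_simp
  ring

section UnitBallVolume

variable {F : Type*} [NormedAddCommGroup F] [InnerProductSpace ℝ F] [FiniteDimensional ℝ F]
  [MeasurableSpace F] [BorelSpace F] [Nontrivial F]

theorem volume_real_unitBall_eq :
    volume.real (ball (0 : F) 1) =
      √Real.pi ^ Module.finrank ℝ F / Real.Gamma (Module.finrank ℝ F / 2 + 1) := by
  have : 0 < Real.Gamma (Module.finrank ℝ F / 2 + 1 : ℝ) := Real.Gamma_pos_of_pos (by positivity)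
  rw [measureReal_def, InnerProductSpace.volume_ball, ENNReal.ofReal_one, one_pow, one_mul,
    ENNReal.toReal_ofReal (by positivity)]

theorem sqrt_mul_volume_unitBall_le {E : Type*} [NormedAddCommGroup E] [InnerProductSpace ℝ E]
    [FiniteDimensional ℝ E] [MeasurableSpace E] [BorelSpace E]
    (hEF : Module.finrank ℝ E = Module.finrank ℝ F + 1) :
    √(Module.finrank ℝ E / (2 * Real.pi)) * volume.real (ball (0 : E) 1) ≤
      volume.real (ball (0 : F) 1) := by
  have : Nontrivial E := Module.nontrivial_of_finrank_pos (R := ℝ) (by omega)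
  rw [volume_real_unitBall_eq, volume_real_unitBall_eq, hEF]
  set k := Module.finrank ℝ F
  have Gamma_ratio : √((k + 1) / 2) * Real.Gamma (k / 2 + 1) ≤ Real.Gamma ((k + 1) / 2 + 1) := by
    convert sqrt_mul_Gamma_add_half_le_Gamma_add_one (x := ((k : ℝ) + 1) / 2) (by positivity)
      using 3
    ring
  have hGk : 0 < Real.Gamma ((k : ℝ) / 2 + 1) := Real.Gamma_pos_of_pos (by positivity)
  have hGk1 : 0 < Real.Gamma (((k : ℝ) + 1) / 2 + 1) := Real.Gamma_pos_of_pos (by positivity)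
  push_cast
  rw [← div_div, Real.sqrt_div' _ Real.pi_pos.le, ← mul_div_assoc, div_le_div_iff₀ hGk1 hGk]
  have : √Real.pi ≠ 0 := by positivity
  calc √((k + 1) / 2) / √Real.pi * √Real.pi ^ (k + 1) * Real.Gamma (k / 2 + 1)
      = √Real.pi ^ k * (√((k + 1) / 2) * Real.Gamma (k / 2 + 1)) := by
        field_simp
        ring
    _ ≤ √Real.pi ^ k * Real.Gamma ((k + 1) / 2 + 1) := by gcongr

theorem setIntegral_ball_one_sub_norm_div {β : ℝ} (hβ : 0 < β) :
    ∫ y in ball (0 : F) β, (1 - ‖y‖ / β) =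
      β ^ Module.finrank ℝ F * volume.real (ball (0 : F) 1) / (Module.finrank ℝ F + 1) := by
  obtain ⟨n, hn⟩ : ∃ n, Module.finrank ℝ F = n + 1 :=
    Nat.exists_eq_succ_of_ne_zero (Module.finrank_pos (R := ℝ)).ne'
  have indicator_norm : (ball (0 : F) β).indicator (fun y => 1 - ‖y‖ / β)
      = fun y => (Iio β).indicator (fun t => 1 - t / β) ‖y‖ := by
    classical
    ext y
    simp only [indicator_apply, mem_ball_zero_iff, mem_Iio]
  have indicator_pow : (fun t : ℝ => t ^ n • (Iio β).indicator (fun t => 1 - t / β) t)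
      = (Iio β).indicator fun t => t ^ n * (1 - t / β) := by
    ext t
    simp only [indicator_apply, smul_eq_mul, mul_ite, mul_zero]
  rw [← integral_indicator measurableSet_ball, indicator_norm, integral_fun_norm_addHaar, hn,
    Nat.add_sub_cancel, indicator_pow, setIntegral_indicator measurableSet_Iio, Ioi_inter_Iio,
    ← integral_Ioc_eq_integral_Ioo, ← intervalIntegral.integral_of_le hβ.le,
    integral_pow_mul_one_sub_div hβ.ne']
  simp only [nsmul_eq_mul, smul_eq_mul, Nat.cast_add_one]
  field_simp
  ring

theorem volume_prod_regionBetween_bicone {β c : ℝ} (hβ : 0 < β) :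
    (volume.prod volume) (regionBetween (fun y : F => c * (‖y‖ / β))
      (fun y => 1 - (1 - c) * (‖y‖ / β)) (ball 0 β)) =
      ENNReal.ofReal
        (β ^ Module.finrank ℝ F * volume.real (ball (0 : F) 1) / (Module.finrank ℝ F + 1)) := by
  have integrable {f : F → ℝ} (hf : Continuous f) : IntegrableOn f (ball 0 β) :=
    (hf.continuousOn.integrableOn_compact (isCompact_closedBall 0 β)).mono_set
      ball_subset_closedBall
  rw [volume_regionBetween_eq_integral (integrable (by fun_prop)) (integrable (by fun_prop))
    measurableSet_ball, ← setIntegral_ball_one_sub_norm_div hβ]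
  · congr 2 with y
    simp only [Pi.sub_apply]
    ring
  · intro y hy
    have : ‖y‖ / β < 1 := (div_lt_one hβ).2 (mem_ball_zero_iff.1 hy)
    linarith

end UnitBallVolume

theorem Ioo_smul_subset_ball {E : Type*} [NormedAddCommGroup E] [NormedSpace ℝ E]
    (A : Set (sphere (0 : E) 1)) : Ioo (0 : ℝ) 1 • ((↑) '' A : Set E) ⊆ ball 0 1 := calc
  Ioo (0 : ℝ) 1 • ((↑) '' A : Set E) ⊆ Ioo (0 : ℝ) 1 • sphere (0 : E) 1 :=
    smul_subset_smul_left (Subtype.coe_image_subset _ _)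
  _ = ball 0 1 \ {0} := by rw [Ioo_smul_sphere_zero] <;> simp
  _ ⊆ ball 0 1 := sdiff_subset

section SphericalSector

variable {E : Type*} [NormedAddCommGroup E] [InnerProductSpace ℝ E]

theorem finrank_orthogonal_span_unit {u : E} (hu : ‖u‖ = 1) {k : ℕ}
    (hE : Module.finrank ℝ E = k + 1) : Module.finrank ℝ (ℝ ∙ u)ᗮ = k :=
  have : Fact (Module.finrank ℝ E = k + 1) := ⟨hE⟩
  Submodule.finrank_orthogonal_span_singleton (norm_ne_zero_iff.1 (hu ▸ one_ne_zero))

/-- The spherical sector of the unit ball around the direction `u`: the nonzero points of the open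
unit ball which make an angle of cosine at least `c` with `u`. -/
def sphericalSector (u : E) (c : ℝ) : Set E := {z | z ≠ 0 ∧ ‖z‖ < 1 ∧ c * ‖z‖ ≤ ⟪z, u⟫}

theorem sphericalSector_subset_Ioo_smul_closedBall (u : sphere (0 : E) 1) {s : ℝ} (hs : 0 ≤ s) :
    sphericalSector (u : E) (1 - s ^ 2 / 2) ⊆ Ioo (0 : ℝ) 1 • ((↑) '' closedBall u s : Set E) := by
  rintro z ⟨hz0, hz1, hzu⟩
  have hz : 0 < ‖z‖ := norm_pos_iff.2 hz0
  have hw : ‖‖z‖⁻¹ • z‖ = 1 := norm_smul_inv_norm (𝕜 := ℝ) hz0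
  refine ⟨‖z‖, ⟨hz, hz1⟩, ‖z‖⁻¹ • z, ⟨⟨‖z‖⁻¹ • z, mem_sphere_zero_iff_norm.2 hw⟩, ?_, rfl⟩,
    smul_inv_smul₀ hz.ne' z⟩
  have angle : 1 - s ^ 2 / 2 ≤ ‖z‖⁻¹ * ⟪z, (u : E)⟫ := by rwa [le_inv_mul_iff₀' hz]
  have dist_sq_le : ‖‖z‖⁻¹ • z - u‖ ^ 2 ≤ s ^ 2 := by
    rw [norm_sub_sq_real, hw, norm_eq_of_mem_sphere u, real_inner_smul_left]
    linarith
  rw [mem_closedBall, Subtype.dist_eq, dist_eq_norm]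
  exact le_of_sq_le_sq dist_sq_le hs

theorem add_smul_mem_sphericalSector {u y : E} (hu : ‖u‖ = 1) (hy : ⟪y, u⟫ = 0) {c β τ : ℝ}
    (hc : 0 ≤ c) (hβ : 0 < β) (hcβ : c ^ 2 + β ^ 2 = 1) (hτ : c * (‖y‖ / β) < τ)
    (hτ' : τ < 1 - (1 - c) * (‖y‖ / β)) : y + τ • u ∈ sphericalSector u c := by
  set ν := ‖y‖ / β with hν
  have hν0 : 0 ≤ ν := by positivity
  have hcν : 0 ≤ c * ν := mul_nonneg hc hν0
  have hyν : ‖y‖ = β * ν := by rw [hν]; field_simp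
  have inner_eq : ⟪y + τ • u, u⟫ = τ := by
    rw [inner_add_left, real_inner_smul_left, real_inner_self_eq_norm_sq, hu, hy]
    ring
  have norm_sq_eq : ‖y + τ • u‖ ^ 2 = τ ^ 2 + (β * ν) ^ 2 := by
    rw [norm_add_sq_real, norm_smul, real_inner_smul_right, hy, hu, hyν, Real.norm_eq_abs,
      mul_one, sq_abs]
    ring
  refine ⟨fun h => ?_, ?_, ?_⟩
  · rw [h, inner_zero_left] at inner_eq
    linarith
  · refine lt_of_pow_lt_pow_left₀ 2 zero_le_one ?_
    rw [norm_sq_eq]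
    have hc1 : 0 ≤ 1 - c := by nlinarith
    have hν1 : 0 ≤ 1 - ν := by nlinarith
    calc τ ^ 2 + (β * ν) ^ 2 < (1 - (1 - c) * ν) ^ 2 + (β * ν) ^ 2 := by gcongr; linarith
      _ = 1 - 2 * (1 - c) * (ν * (1 - ν)) + (c ^ 2 + β ^ 2 - 1) * ν ^ 2 := by ring
      _ ≤ 1 ^ 2 := by
        rw [hcβ]
        nlinarith [mul_nonneg hc1 (mul_nonneg hν0 hν1)]
  · rw [inner_eq]
    refine le_of_sq_le_sq ?_ (by linarith)
    calc (c * ‖y + τ • u‖) ^ 2 = c ^ 2 * τ ^ 2 + β ^ 2 * (c * ν) ^ 2 := by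
          rw [mul_pow, norm_sq_eq]; ring
      _ ≤ c ^ 2 * τ ^ 2 + β ^ 2 * τ ^ 2 := by gcongr
      _ = τ ^ 2 := by rw [← add_mul, hcβ, one_mul]

section Volume

variable [FiniteDimensional ℝ E] [MeasurableSpace E] [BorelSpace E]

theorem measurePreserving_add_smul {u : E} (hu : ‖u‖ = 1) :
    MeasurePreserving (fun p : (ℝ ∙ u)ᗮ × ℝ => (p.1 : E) + p.2 • u) := by
  have orthogonal := (ℝ ∙ u).orthogonalDecomposition.symm.measurePreserving.comp
    (WithLp.volume_preserving_toLp (ℝ ∙ u) (ℝ ∙ u)ᗮ)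
  have line := (LinearIsometryEquiv.toSpanUnitSingleton (𝕜 := ℝ) u hu).measurePreserving.prod
    (MeasurePreserving.id (volume : Measure (ℝ ∙ u)ᗮ))
  convert (orthogonal.comp line).comp Measure.measurePreserving_swap using 1
  · ext p
    simp [add_comm]
  · rfl

theorem le_volume_sphericalSector {u : E} (hu : ‖u‖ = 1) {k : ℕ} (hk : 0 < k)
    (hE : Module.finrank ℝ E = k + 1) {c β : ℝ} (hc : 0 ≤ c) (hβ : 0 < β)
    (hcβ : c ^ 2 + β ^ 2 = 1) :
    β ^ k * volume.real (ball (0 : (ℝ ∙ u)ᗮ) 1) / (k + 1) ≤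
      volume.real (sphericalSector u c) := by
  have hF := finrank_orthogonal_span_unit hu hE
  have : Nontrivial (ℝ ∙ u)ᗮ := Module.nontrivial_of_finrank_pos (R := ℝ) (by omega)
  let bicone := regionBetween (fun y : (ℝ ∙ u)ᗮ => c * (‖y‖ / β))
    (fun y => 1 - (1 - c) * (‖y‖ / β)) (ball 0 β)
  have bicone_subset : bicone ⊆ (fun p => (p.1 : E) + p.2 • u) ⁻¹' sphericalSector u c := by
    rintro ⟨y, τ⟩ ⟨-, hτ, hτ'⟩
    exact add_smul_mem_sphericalSector hu (Submodule.mem_orthogonal_singleton_iff_inner_left.1 y.2)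
      hc hβ hcβ hτ hτ'
  have sector_finite : volume (sphericalSector u c) ≠ ∞ :=
    measure_ne_top_of_subset (fun z hz => mem_ball_zero_iff.2 hz.2.1) measure_ball_lt_top.ne
  rw [measureReal_def (s := sphericalSector u c),
    ← ENNReal.ofReal_le_iff_le_toReal sector_finite, ← hF,
    ← volume_prod_regionBetween_bicone hβ, ← (measurePreserving_add_smul hu).map_eq]
  exact (measure_mono bicone_subset).trans
    (Measure.le_map_apply (measurePreserving_add_smul hu).measurable.aemeasurable _)

end Volume

end SphericalSector

section UniformMeasure

variable (E : Type*) [NormedAddCommGroup E] [InnerProductSpace ℝ E] [FiniteDimensional ℝ E]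
  [MeasurableSpace E] [BorelSpace E]

/-- The uniform probability measure on the unit sphere: surface measure divided by total area. -/
def uniformSphere : Measure (sphere (0 : E) 1) :=
  ((volume : Measure E).toSphere univ)⁻¹ • (volume : Measure E).toSphere

variable {E}

instance isProbabilityMeasure_uniformSphere [Nontrivial E] :
    IsProbabilityMeasure (uniformSphere E) := by
  have : NeZero (volume : Measure E).toSphere := ⟨Measure.toSphere_ne_zero _⟩
  exact isProbabilityMeasureSMul

theorem uniformSphere_real_apply [Nontrivial E] {A : Set (sphere (0 : E) 1)}
    (hA : MeasurableSet A) :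
    (uniformSphere E).real A =
      volume.real (Ioo (0 : ℝ) 1 • ((↑) '' A : Set E)) / volume.real (ball (0 : E) 1) := by
  have : (Module.finrank ℝ E : ℝ) ≠ 0 := Nat.cast_ne_zero.2 Module.finrank_pos.ne'
  simp only [uniformSphere, measureReal_def, Measure.smul_apply, smul_eq_mul, ENNReal.toReal_mul,
    ENNReal.toReal_inv, Measure.toSphere_apply' _ hA, Measure.toSphere_apply_univ,
    ENNReal.toReal_natCast]
  field_simp

theorem le_uniformSphere_real_closedBall {k : ℕ} (hk : 0 < k) (hE : Module.finrank ℝ E = k + 1)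
    (u : sphere (0 : E) 1) {s : ℝ} (hs : 0 < s) (hs2 : s ^ 2 ≤ 2) :
    (s * √(1 - s ^ 2 / 4)) ^ k / √(2 * Real.pi * (k + 1)) ≤
      (uniformSphere E).real (closedBall u s) := by
  have hu : ‖(u : E)‖ = 1 := norm_eq_of_mem_sphere u
  have hF := finrank_orthogonal_span_unit hu hE
  have : Nontrivial E := Module.nontrivial_of_finrank_pos (R := ℝ) (by omega)
  have : Nontrivial (ℝ ∙ (u : E))ᗮ := Module.nontrivial_of_finrank_pos (R := ℝ) (by omega)
  set β := s * √(1 - s ^ 2 / 4)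
  have hβ : 0 < β := mul_pos hs (Real.sqrt_pos.2 (by linarith))
  have hcβ : (1 - s ^ 2 / 2) ^ 2 + β ^ 2 = 1 := by
    rw [mul_pow, Real.sq_sqrt (by linarith)]
    ring
  have ball_pos : 0 < volume.real (ball (0 : E) 1) :=
    ENNReal.toReal_pos (measure_ball_pos _ _ one_pos).ne' measure_ball_lt_top.ne
  have ball_ratio := sqrt_mul_volume_unitBall_le (E := E) (F := (ℝ ∙ (u : E))ᗮ) (by omega)
  have normalization :
      1 / √(2 * Real.pi * (k + 1)) = √(Module.finrank ℝ E / (2 * Real.pi)) / (k + 1) := by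
    rw [div_eq_div_iff (by positivity) (by positivity), one_mul, ← Real.sqrt_mul (by positivity),
      hE, Nat.cast_add_one, eq_comm, Real.sqrt_eq_iff_eq_sq (by positivity) (by positivity)]
    field_simp
  rw [uniformSphere_real_apply isClosed_closedBall.measurableSet, le_div_iff₀ ball_pos]
  calc β ^ k / √(2 * Real.pi * (k + 1)) * volume.real (ball (0 : E) 1)
      = β ^ k * (√(Module.finrank ℝ E / (2 * Real.pi)) * volume.real (ball (0 : E) 1))
          / (k + 1) := by
        rw [div_eq_mul_one_div, normalization]
        ring
    _ ≤ β ^ k * volume.real (ball (0 : (ℝ ∙ (u : E))ᗮ) 1) / (k + 1) := by gcongr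
    _ ≤ volume.real (sphericalSector (u : E) (1 - s ^ 2 / 2)) :=
        le_volume_sphericalSector hu hk hE (by linarith) hβ hcβ
    _ ≤ volume.real (Ioo (0 : ℝ) 1 • ((↑) '' closedBall u s : Set E)) :=
        measureReal_mono (sphericalSector_subset_Ioo_smul_closedBall u hs.le)
          (measure_ne_top_of_subset (Ioo_smul_subset_ball _) measure_ball_lt_top.ne)

theorem le_uniformSphere_real_closedBall_of_le_one {k : ℕ} (hk : 0 < k)
    (hE : Module.finrank ℝ E = k + 1) (u : sphere (0 : E) 1) {s : ℝ} (hs : 0 < s) (hs1 : s ≤ 1) :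
    (√3 / 2 * s) ^ k / √(2 * Real.pi * (k + 1)) ≤ (uniformSphere E).real (closedBall u s) := by
  have hs2 : s ^ 2 ≤ 1 := pow_le_one₀ hs.le hs1
  have : √3 / 2 ≤ √(1 - s ^ 2 / 4) := by
    rw [Real.le_sqrt (by positivity), div_pow, Real.sq_sqrt] <;> linarith
  rw [mul_comm (√3 / 2)]
  exact le_trans (by gcongr) (le_uniformSphere_real_closedBall hk hE u hs (by linarith))

end UniformMeasure

section UnitSphereCover

theorem exists_finset_isCover_add_two_mul_unitSphere {E : Type*} [NormedAddCommGroup E]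
    [InnerProductSpace ℝ E] [FiniteDimensional ℝ E] {k : ℕ} (hk : 0 < k)
    (hE : Module.finrank ℝ E = k + 1) {s t : ℝ≥0} (ht : 0 < t) (hts : t ≤ s) (hs : s ≤ 1) :
    ∃ T : Finset (sphere (0 : E) 1), IsCover (s + 2 * t) univ (T : Set (sphere (0 : E) 1)) ∧
      (T.card : ℝ) ≤
        (k * Real.log (s / t) + 1) / ((√3 / 2 * s) ^ k / √(2 * Real.pi * (k + 1))) + 1 := by
  borelize E
  have : Nontrivial E := Module.nontrivial_of_finrank_pos (R := ℝ) (by omega)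
  have hs0 : 0 < s := ht.trans_le hts
  have exp_mul : Real.exp (k * Real.log (s / t)) * ((√3 / 2 * t) ^ k / √(2 * Real.pi * (k + 1)))
      = (√3 / 2 * s) ^ k / √(2 * Real.pi * (k + 1)) := by
    rw [Real.exp_nat_mul, Real.exp_log (by positivity), ← mul_div_assoc, ← mul_pow]
    congr 2
    field_simp
  rw [← exp_mul]
  refine exists_finset_isCover_card_le (μ := uniformSphere E) (by positivity) ?_
    (fun x => le_uniformSphere_real_closedBall_of_le_one hk hE x ht (hts.trans hs)) fun x => ?_
  · exact mul_nonneg k.cast_nonneg (Real.log_nonneg ((one_le_div₀ ht).2 hts))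
  · exact exp_mul ▸ le_uniformSphere_real_closedBall_of_le_one hk hE x hs0 hs

theorem mul_log_nine_add_one_div_add_one_le {k : ℕ} (hk : 0 < k) {q : ℝ} (hq0 : 0 < q)
    (hq : q ≤ 1 / 4) : (k * Real.log 9 + 1) / q + 1 ≤ 5 * k * Real.log (k + 1) / q := by
  have hk1 : (1 : ℝ) ≤ k := mod_cast hk
  have log_le : Real.log 9 + 5 / 4 ≤ 5 * Real.log 2 := by
    rw [show (9 : ℝ) = 3 ^ 2 by norm_num, Real.log_pow]
    push_cast
    linarith [Real.log_three_lt_d9, Real.log_two_gt_d9]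
  have log_mono : Real.log 2 ≤ Real.log (k + 1) := Real.log_le_log two_pos (by linarith)
  rw [div_add_one hq0.ne']
  gcongr
  calc k * Real.log 9 + 1 + q ≤ k * (Real.log 9 + 5 / 4) := by linarith
    _ ≤ k * (5 * Real.log (k + 1)) := by gcongr; linarith
    _ = 5 * k * Real.log (k + 1) := by ring

theorem sqrt_three_div_two_mul_pow_div_le_one_quarter {k : ℕ} (hk : 0 < k) {s : ℝ} (hs0 : 0 ≤ s)
    (hs : s ≤ 9 / 11) : (√3 / 2 * s) ^ k / √(2 * Real.pi * (k + 1)) ≤ 1 / 4 := by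
  have hk1 : (1 : ℝ) ≤ k := mod_cast hk
  have three_le : 3 ≤ √(2 * Real.pi * (k + 1)) :=
    Real.le_sqrt_of_sq_le (by nlinarith [Real.pi_gt_three])
  have base_le : √3 / 2 * s ≤ 3 / 4 := calc
    √3 / 2 * s ≤ 11 / 6 / 2 * (9 / 11) := by
      gcongr
      exact Real.sqrt_le_iff.2 ⟨by norm_num, by norm_num⟩
    _ = 3 / 4 := by norm_num
  calc (√3 / 2 * s) ^ k / √(2 * Real.pi * (k + 1)) ≤ 3 / 4 / 3 := by
        gcongr
        exact (pow_le_of_le_one (by positivity) (base_le.trans (by norm_num)) hk.ne').trans base_le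
    _ = 1 / 4 := by norm_num

theorem exists_finset_isCover_unitSphere {E : Type*} [NormedAddCommGroup E]
    [InnerProductSpace ℝ E] {k : ℕ} (hk : 0 < k)
    (hE : Module.finrank ℝ E = k + 1) {ρ : ℝ≥0} (hρ : 0 < ρ) (hρ1 : ρ ≤ 1) :
    ∃ T : Finset (sphere (0 : E) 1), IsCover ρ univ (T : Set (sphere (0 : E) 1)) ∧
      (T.card : ℝ) ≤ 5 * k * Real.log (k + 1) * √(2 * Real.pi * (k + 1)) * (√2 / ρ) ^ k := by
  have : FiniteDimensional ℝ E := .of_finrank_pos (by omega)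
  have scale_le (c : ℝ≥0) : c * ρ ≤ c := mul_le_of_le_one_right c.2 hρ1
  obtain ⟨T, hT, hTcard⟩ := exists_finset_isCover_add_two_mul_unitSphere hk hE
    (s := 9 / 11 * ρ) (t := 1 / 11 * ρ) (by positivity) (by gcongr; norm_num)
    ((scale_le _).trans (div_le_one_of_le₀ (by norm_num) (by norm_num)))
  refine ⟨T, by convert hT using 1; ring, ?_⟩
  have ratio_eq : ((9 / 11 * ρ : ℝ≥0) : ℝ) / (1 / 11 * ρ : ℝ≥0) = 9 := by
    push_cast
    field_simp
  rw [ratio_eq] at hTcard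
  have cap_inv_le : 1 / (√3 / 2 * (9 / 11 * ρ : ℝ≥0)) ≤ √2 / ρ := by
    have : 22 / 9 ≤ √3 * √2 := by
      rw [← Real.sqrt_mul (by norm_num)]
      exact Real.le_sqrt_of_sq_le (by norm_num)
    rw [div_le_div_iff₀ (by positivity) (by positivity)]
    push_cast
    nlinarith [ρ.coe_nonneg]
  have log_nonneg : 0 ≤ Real.log (k + 1) := mod_cast Real.log_natCast_nonneg (k + 1)
  calc (T.card : ℝ) ≤ 5 * k * Real.log (k + 1) /
          ((√3 / 2 * (9 / 11 * ρ : ℝ≥0)) ^ k / √(2 * Real.pi * (k + 1))) :=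
        hTcard.trans <| mul_log_nine_add_one_div_add_one_le hk (by positivity) <|
          sqrt_three_div_two_mul_pow_div_le_one_quarter hk (NNReal.coe_nonneg _)
            (mod_cast scale_le (9 / 11))
    _ = 5 * k * Real.log (k + 1) * √(2 * Real.pi * (k + 1))
          * (1 / (√3 / 2 * (9 / 11 * ρ : ℝ≥0))) ^ k := by
        rw [div_pow, one_pow]
        field_simp
    _ ≤ 5 * k * Real.log (k + 1) * √(2 * Real.pi * (k + 1)) * (√2 / ρ) ^ k := by gcongr

end UnitSphereCover

section SphereCover

variable {E : Type*} [NormedAddCommGroup E] [NormedSpace ℝ E]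

theorem exists_finset_card_le_two_isCover_unitSphere (hE : Module.finrank ℝ E = 1) (ρ : ℝ≥0) :
    ∃ T : Finset (sphere (0 : E) 1),
      T.card ≤ 2 ∧ IsCover ρ univ (T : Set (sphere (0 : E) 1)) := by
  classical
  have : Nontrivial E := Module.nontrivial_of_finrank_pos (R := ℝ) (by omega)
  obtain ⟨e⟩ : Nonempty (sphere (0 : E) 1) :=
    (NormedSpace.sphere_nonempty.2 zero_le_one).to_subtype
  have norm_e : ‖(e : E)‖ = 1 := norm_eq_of_mem_sphere e
  refine ⟨{e, -e}, Finset.card_le_two, (IsCover.refl ρ univ).mono fun x _ => ?_⟩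
  obtain ⟨c, hc⟩ :=
    exists_smul_eq_of_finrank_eq_one hE (norm_ne_zero_iff.1 (norm_e ▸ one_ne_zero)) (x : E)
  have abs_c : |c| = 1 := by
    have := congrArg norm hc
    rwa [norm_smul, norm_e, mul_one, norm_eq_of_mem_sphere, Real.norm_eq_abs] at this
  rcases (abs_eq zero_le_one).1 abs_c with rfl | rfl
  · have : x = e := Subtype.ext (by rw [← hc, one_smul])
    simp [this]
  · have : x = -e := Subtype.ext (by rw [← hc, neg_one_smul]; rfl)
    simp [this]

theorem exists_fin_subset_range {α : Type*} [Nonempty α] {T : Finset α} {m : ℕ}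
    (hT : T.card ≤ m) : ∃ f : Fin m → α, (T : Set α) ⊆ range f := by
  obtain ⟨e⟩ := Function.Embedding.nonempty_of_card_le (α := T) (β := Fin m) (by simpa using hT)
  exact ⟨Function.extend e (↑) fun _ => Classical.arbitrary α,
    fun y hy => ⟨e ⟨y, hy⟩, e.injective.extend_apply _ _ _⟩⟩

theorem exists_fin_sphere_subset_iUnion_closedBall [Nontrivial E] {T : Finset (sphere (0 : E) 1)}
    {ρ : ℝ≥0} {m : ℕ} (hT : IsCover ρ univ (T : Set (sphere (0 : E) 1))) (hm : T.card ≤ m)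
    {R : ℝ} (hR : 0 < R) :
    ∃ v : Fin m → E, (∀ i, v i ∈ sphere 0 R) ∧
      sphere 0 R ⊆ ⋃ i, closedBall (v i) (ρ * R) := by
  have : Nonempty (sphere (0 : E) 1) := (NormedSpace.sphere_nonempty.2 zero_le_one).to_subtype
  obtain ⟨f, hf⟩ := exists_fin_subset_range hm
  refine ⟨fun i => R • (f i : E), fun i => ?_, fun x hx => ?_⟩
  · rw [mem_sphere_zero_iff_norm, norm_smul, Real.norm_of_nonneg hR.le, norm_eq_of_mem_sphere,
      mul_one]
  · have unit : R⁻¹ • x ∈ sphere (0 : E) 1 := by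
      rw [mem_sphere_zero_iff_norm, norm_smul, norm_inv, Real.norm_of_nonneg hR.le,
        mem_sphere_zero_iff_norm.1 hx, inv_mul_cancel₀ hR.ne']
    obtain ⟨y, hyT, hxy⟩ :=
      mem_iUnion₂.1 (isCover_iff_subset_iUnion_closedBall.1 hT (mem_univ ⟨R⁻¹ • x, unit⟩))
    obtain ⟨i, rfl⟩ := hf hyT
    rw [mem_closedBall, Subtype.dist_eq, dist_eq_norm] at hxy
    refine mem_iUnion.2 ⟨i, ?_⟩
    rw [mem_closedBall, dist_eq_norm]
    calc ‖x - R • (f i : E)‖ = ‖R • (R⁻¹ • x - f i)‖ := by rw [smul_sub, smul_inv_smul₀ hR.ne']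
      _ = ‖R⁻¹ • x - f i‖ * R := by rw [norm_smul, Real.norm_of_nonneg hR.le, mul_comm]
      _ ≤ ρ * R := by gcongr

end SphereCover

theorem mul_rpow_one_div_mul_div_pow {a B R r : ℝ} (hB : 0 ≤ B) {k : ℕ} (hk : k ≠ 0) :
    (a * B ^ ((1 : ℝ) / k) * R / r) ^ k = B * (a / (r / R)) ^ k := by
  rw [show a * B ^ ((1 : ℝ) / k) * R / r = B ^ ((1 : ℝ) / k) * (a / (r / R)) by
    rw [div_div_eq_mul_div]; ring, mul_pow, one_div, Real.rpow_inv_natCast_pow hB hk]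

theorem sphere_covering_general {E : Type*} [NormedAddCommGroup E] [InnerProductSpace ℝ E]
    {k m : ℕ} (hE : Module.finrank ℝ E = k + 1) {r R : ℝ} (hr : 0 < r) (hrR : r ≤ R)
    (hm : (√2 * (5 * k * Real.log (k + 1) * √(2 * Real.pi * (k + 1))) ^ ((1 : ℝ) / k) * R / r) ^ k
      < m) :
    ∃ v : Fin m → E, (∀ i, v i ∈ sphere 0 R) ∧ sphere 0 R ⊆ ⋃ i, closedBall (v i) r := by
  have hR : 0 < R := hr.trans_le hrR
  have : Nontrivial E := Module.nontrivial_of_finrank_pos (R := ℝ) (by omega)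
  let ρ : ℝ≥0 := ⟨r / R, by positivity⟩
  have hρR : ρ * R = r := div_mul_cancel₀ r hR.ne'
  rw [← hρR]
  rcases k.eq_zero_or_pos with rfl | hk
  · have two_le : 2 ≤ m := Nat.succ_le_of_lt (by simpa using hm)
    obtain ⟨T, hTcard, hT⟩ := exists_finset_card_le_two_isCover_unitSphere hE ρ
    exact exists_fin_sphere_subset_iUnion_closedBall hT (hTcard.trans two_le) hR
  · obtain ⟨T, hT, hTcard⟩ :=
      exists_finset_isCover_unitSphere hk hE (ρ := ρ) (div_pos hr hR) ((div_le_one hR).2 hrR)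
    have log_nonneg : 0 ≤ Real.log (k + 1) := mod_cast Real.log_natCast_nonneg (k + 1)
    rw [mul_rpow_one_div_mul_div_pow (by positivity) hk.ne'] at hm
    exact exists_fin_sphere_subset_iUnion_closedBall hT (mod_cast hTcard.trans hm.le) hR

theorem lpNorm_two_eq {d : ℕ} (x : Fin d → ℝ) :
    lpNorm 2 x = ‖(WithLp.toLp 2 x : EuclideanSpace ℝ (Fin d))‖ := by
  rw [EuclideanSpace.norm_eq, lpNorm, if_neg (by simp), Real.sqrt_eq_rpow]
  simp

/-- **Covering the sphere `∂B₂^{k+1}(0, R)` by `m` balls of radius `r`**. -/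
theorem sphere_covering
    (k m : ℕ) (r R : ℝ) (hr : 0 < r) (hrR : r ≤ R)
    (hm : (Real.sqrt 2 *
        (5 * (k : ℝ) * Real.log ((k : ℝ) + 1) * Real.sqrt (2 * Real.pi * ((k : ℝ) + 1)))
          ^ ((1 : ℝ) / (k : ℝ)) * R / r) ^ k < (m : ℝ)) :
    ∃ v : Fin m → (Fin (k + 1) → ℝ),
      (∀ i, lpNorm 2 (v i) = R) ∧
      ∀ x : Fin (k + 1) → ℝ, lpNorm 2 x = R → ∃ i, lpNorm 2 (x - v i) ≤ r := by
  obtain ⟨v, hv, hcover⟩ := sphere_covering_general (E := EuclideanSpace ℝ (Fin (k + 1)))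
    finrank_euclideanSpace_fin hr hrR hm
  simp only [lpNorm_two_eq]
  exact ⟨fun i => v i, fun i => mem_sphere_zero_iff_norm.1 (hv i), fun x hx =>
    (mem_iUnion.1 (hcover (mem_sphere_zero_iff_norm.2 hx))).imp fun _ => mem_closedBall_iff_norm.1⟩

end
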